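/- For every nonzero real number k: (i) cos(4π/k) ≥ −1/2 if and only if k ≥ 6, or k ≤ −6, or there exists a nonzero integer z with 6/(1+3z) ≤ k ≤ 6/(−1+3z); and (ii) cos(4π/k) ≥ 0 if and only if k ≥ 8, or k ≤ −8, or there exists a nonzero integer z with 8/(1+4z) ≤ k ≤ 8/(−1+4z). (These characterize the sets of k for which the 3-strand, respectively 4-strand, fundamental R-matrices are unitary at q = exp(2πi/k).) -/

import Mathlib

open Real

/-! An angle `θ` satisfies `cos a ≤ cos θ` exactly when it lies within `a` of a multiple `2πz` of
the period. For `θ = c / k` each such `z` confines `c / k` to the interval `[2πz - a, 2πz + a]`.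
If `z ≠ 0` and `a ≤ π`, this interval avoids `0`, so inverting it gives a bounded interval of `k`;
`z = 0` gives the two unbounded rays `c / a ≤ |k|`. -/

theorem cos_le_cos_iff_abs_le {a x : ℝ} (ha₀ : 0 ≤ a) (ha : a ≤ π) (hx : |x| ≤ π) :
    cos a ≤ cos x ↔ |x| ≤ a := by
  rw [← cos_abs x]
  exact strictAntiOn_cos.le_iff_ge ⟨ha₀, ha⟩ ⟨abs_nonneg x, hx⟩

theorem cos_le_cos_iff_exists_abs_sub_le {a θ : ℝ} (ha₀ : 0 ≤ a) (ha : a ≤ π) :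
    cos a ≤ cos θ ↔ ∃ z : ℤ, |θ - z * (2 * π)| ≤ a := by
  constructor
  · intro h
    have hround : |θ - round ((2 * π)⁻¹ * θ) * (2 * π)| ≤ π := by
      have hnorm := AddCircle.norm_le_half_period (2 * π) (x := θ) two_pi_pos.ne'
      rwa [AddCircle.norm_eq, abs_of_pos two_pi_pos, mul_div_cancel_left₀ π two_ne_zero] at hnorm
    refine ⟨_, (cos_le_cos_iff_abs_le ha₀ ha hround).mp ?_⟩
    rwa [cos_sub_int_mul_two_pi]
  · rintro ⟨z, hz⟩
    rw [← cos_sub_int_mul_two_pi θ z]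
    exact (cos_le_cos_iff_abs_le ha₀ ha (hz.trans ha)).mpr hz

section LinearOrderedField

variable {K : Type*} [Field K] [LinearOrder K] [IsStrictOrderedRing K] {b c k l r u : K}

theorem div_mem_Icc_iff_of_pos (hc : 0 < c) (hl : 0 < l) (hu : 0 < u) :
    c / k ∈ Set.Icc l u ↔ k ∈ Set.Icc (c / u) (c / l) := by
  suffices h : 0 < k → (c / k ∈ Set.Icc l u ↔ k ∈ Set.Icc (c / u) (c / l)) from
    ⟨fun hk ↦ (h ((div_pos_iff_of_pos_left hc).mp (hl.trans_le hk.1))).mp hk,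
      fun hk ↦ (h ((div_pos hc hu).trans_le hk.1)).mpr hk⟩
  intro hk
  rw [Set.mem_Icc, Set.mem_Icc, le_div_comm₀ hl hk, div_le_comm₀ hk hu, and_comm]

theorem div_mem_Icc_iff_of_neg (hc : 0 < c) (hl : l < 0) (hu : u < 0) :
    c / k ∈ Set.Icc l u ↔ k ∈ Set.Icc (c / u) (c / l) := by
  have hneg := div_mem_Icc_iff_of_pos (k := -k) hc (neg_pos.mpr hu) (neg_pos.mpr hl)
  simpa only [div_neg, Set.mem_Icc, neg_le_neg_iff, and_comm] using hneg

theorem abs_div_sub_le_iff (hc : 0 < c) (hr : 0 ≤ r) (hb : r < |b|) :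
    |c / k - b| ≤ r ↔ c / (b + r) ≤ k ∧ k ≤ c / (b - r) := by
  rw [abs_sub_comm, Set.mem_Icc_iff_abs_le, ← Set.mem_Icc]
  rcases lt_abs.mp hb with hb | hb
  · exact div_mem_Icc_iff_of_pos hc (by linarith) (by linarith)
  · exact div_mem_Icc_iff_of_neg hc (by linarith) (by linarith)

theorem abs_div_le_iff (hc : 0 < c) (hr : 0 < r) (hk : k ≠ 0) :
    |c / k| ≤ r ↔ c / r ≤ k ∨ k ≤ -(c / r) := by
  rw [abs_div, abs_of_pos hc, div_le_comm₀ (abs_pos.mpr hk) hr, le_abs, le_neg]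

end LinearOrderedField

theorem lt_abs_int_mul_two_pi {a : ℝ} (ha : a < 2 * π) {z : ℤ} (hz : z ≠ 0) :
    a < |z * (2 * π)| := by
  have hz_one : (1 : ℝ) ≤ |(z : ℝ)| := mod_cast Int.one_le_abs hz
  calc
    a < 1 * (2 * π) := by rwa [one_mul]
    _ ≤ |(z : ℝ)| * (2 * π) := by gcongr
    _ = |z * (2 * π)| := by rw [abs_mul, abs_of_pos two_pi_pos]

theorem cos_le_cos_div_iff {a c k : ℝ} (ha₀ : 0 < a) (ha : a ≤ π) (hc : 0 < c) (hk : k ≠ 0) :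
    cos a ≤ cos (c / k) ↔
      c / a ≤ k ∨ k ≤ -(c / a) ∨
        ∃ z : ℤ, z ≠ 0 ∧ c / (z * (2 * π) + a) ≤ k ∧ k ≤ c / (z * (2 * π) - a) := by
  have hzero : |c / k - (0 : ℤ) * (2 * π)| ≤ a ↔ c / a ≤ k ∨ k ≤ -(c / a) := by
    rw [Int.cast_zero, zero_mul, sub_zero, abs_div_le_iff hc ha₀ hk]
  have hne (z : ℤ) (hz : z ≠ 0) : |c / k - z * (2 * π)| ≤ a ↔
      c / (z * (2 * π) + a) ≤ k ∧ k ≤ c / (z * (2 * π) - a) :=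
    abs_div_sub_le_iff hc ha₀.le (lt_abs_int_mul_two_pi (by linarith [pi_pos]) hz)
  calc
    cos a ≤ cos (c / k) ↔ ∃ z : ℤ, |c / k - z * (2 * π)| ≤ a :=
      cos_le_cos_iff_exists_abs_sub_le ha₀.le ha
    _ ↔ |c / k - (0 : ℤ) * (2 * π)| ≤ a ∨ ∃ z : ℤ, z ≠ 0 ∧ |c / k - z * (2 * π)| ≤ a := by
      constructor
      · rintro ⟨z, h⟩
        rcases eq_or_ne z 0 with rfl | hz
        exacts [.inl h, .inr ⟨z, hz, h⟩]
      · rintro (h | ⟨z, -, h⟩)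
        exacts [⟨0, h⟩, ⟨z, h⟩]
    _ ↔ _ := by
      rw [hzero, or_assoc]
      exact or_congr_right (or_congr_right (exists_congr fun z ↦ and_congr_right (hne z)))

theorem cos_two_pi_div_le_cos_four_pi_div_iff {n k : ℝ} (hn : 2 ≤ n) (hk : k ≠ 0) :
    cos (2 * π / n) ≤ cos (4 * π / k) ↔
      2 * n ≤ k ∨ k ≤ -(2 * n) ∨
        ∃ z : ℤ, z ≠ 0 ∧ 2 * n / (1 + n * z) ≤ k ∧ k ≤ 2 * n / (-1 + n * z) := by
  have hn₀ : 0 < n := two_pos.trans_le hn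
  have hle : 2 * π / n ≤ π := by
    rw [div_le_iff₀ hn₀, mul_comm]
    gcongr
  have hray : 4 * π / (2 * π / n) = 2 * n := by
    field_simp
    norm_num
  have hscale (x : ℝ) : 4 * π / (2 * π / n * x) = 2 * n / x := by
    rw [← div_div, hray]
  have hleft (z : ℤ) : z * (2 * π) + 2 * π / n = 2 * π / n * (1 + n * z) := by
    field_simp
    ring
  have hright (z : ℤ) : z * (2 * π) - 2 * π / n = 2 * π / n * (-1 + n * z) := by
    field_simp
    ring
  simpa only [hray, hleft, hright, hscale] using
    cos_le_cos_div_iff (div_pos two_pi_pos hn₀) hle (mul_pos four_pos pi_pos) hk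

theorem cos_two_pi_div_three : cos (2 * π / 3) = -1 / 2 := by
  rw [show 2 * π / 3 = π - π / 3 by ring, cos_pi_sub, cos_pi_div_three, neg_div]

theorem cos_two_pi_div_four : cos (2 * π / 4) = 0 := by
  rw [show 2 * π / 4 = π / 2 by ring, cos_pi_div_two]

/-- The regions of real `k` where the 3-strand (resp. 4-strand) fundamental
`R`-matrices are unitary at `q = exp(2πi/k)`:
`cos(4π/k) ≥ −1/2` iff `k ≥ 6`, or `k ≤ −6`, or `6/(1+3z) ≤ k ≤ 6/(−1+3z)` for some
nonzero integer `z`; and `cos(4π/k) ≥ 0` iff `k ≥ 8`, or `k ≤ −8`, or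
`8/(1+4z) ≤ k ≤ 8/(−1+4z)` for some nonzero integer `z`. -/
theorem stmt18 (k : ℝ) (hk : k ≠ 0) :
    (-1 / 2 ≤ Real.cos (4 * π / k) ↔
      6 ≤ k ∨ k ≤ -6 ∨
        ∃ z : ℤ, z ≠ 0 ∧ 6 / (1 + 3 * (z : ℝ)) ≤ k ∧ k ≤ 6 / (-1 + 3 * (z : ℝ))) ∧
    (0 ≤ Real.cos (4 * π / k) ↔
      8 ≤ k ∨ k ≤ -8 ∨
        ∃ z : ℤ, z ≠ 0 ∧ 8 / (1 + 4 * (z : ℝ)) ≤ k ∧ k ≤ 8 / (-1 + 4 * (z : ℝ))) := by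
  have h₃ := cos_two_pi_div_le_cos_four_pi_div_iff (n := 3) (by norm_num) hk
  have h₄ := cos_two_pi_div_le_cos_four_pi_div_iff (n := 4) (by norm_num) hk
  rw [cos_two_pi_div_three, show (2 * 3 : ℝ) = 6 by norm_num] at h₃
  rw [cos_two_pi_div_four, show (2 * 4 : ℝ) = 8 by norm_num] at h₄
  exact ⟨h₃, h₄⟩
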